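/- Let f : ℕ → ℝ be a nondecreasing function with f(n) → +∞ as n → ∞. If f(n+1) − f(n) = o(f(n)) as n → ∞, then f(f^{[-1]}(y))/y → 1 as y → +∞ (over real y). -/

import Mathlib

open MeasureTheory Filter Set Asymptotics

noncomputable section

/-- A topological partition of `[0,1]`: an (automatically at most countable) collection of
pairwise disjoint nonempty open subintervals of `[0,1]` whose closures cover `[0,1]`. -/
def IsTopPartition (P : Set (Set ℝ)) : Prop :=
  P.Countable ∧
  (∀ I ∈ P, ∃ a b : ℝ, a < b ∧ 0 ≤ a ∧ b ≤ 1 ∧ I = Set.Ioo a b) ∧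
  P.PairwiseDisjoint id ∧
  (⋃ I ∈ P, closure I) = Set.Icc (0 : ℝ) 1

/-- The set `E^Ps` of endpoints of the intervals of the partitions of the sequence `Ps`:
the points of `[0,1]` not covered by the open intervals of some partition. -/
def endpointSet (Ps : ℕ → Set (Set ℝ)) : Set ℝ :=
  ⋃ n, (Set.Icc (0 : ℝ) 1 \ ⋃₀ Ps n)

/-- `I_n^Ps(x)`: the unique interval of the partition `P` containing `x`
(the empty set if there is none). -/
def cell (P : Set (Set ℝ)) (x : ℝ) : Set ℝ :=
  ⋃₀ {I | I ∈ P ∧ x ∈ I}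

/-- A sequence of partitions is self-refining if every interval at depth `n+1` is contained
in an interval at depth `n`. -/
def SelfRefining (Ps : ℕ → Set (Set ℝ)) : Prop :=
  ∀ n, ∀ I ∈ Ps (n + 1), ∃ J ∈ Ps n, I ⊆ J

/-- Strictly self-refining: self-refining with `P_{n+1} ≠ P_n` for all `n`. -/
def StrictSelfRefining (Ps : ℕ → Set (Set ℝ)) : Prop :=
  SelfRefining Ps ∧ ∀ n, Ps (n + 1) ≠ Ps n

/-- `Ps` is log-balanced a.e. with respect to `lam` with weight function `f`. -/
def LogBalancedAE (lam : Measure ℝ) (Ps : ℕ → Set (Set ℝ)) (f : ℕ → ℝ) : Prop :=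
  lam (endpointSet Ps) = 0 ∧ Tendsto f atTop atTop ∧
    ∀ᵐ x ∂lam,
      Tendsto (fun n => -Real.log ((lam (cell (Ps n) x)).toReal) / f n) atTop (nhds 1)

/-- `Ps` is log-balanced in measure with respect to `lam` with weight function `f`. -/
def LogBalancedInMeasure (lam : Measure ℝ) (Ps : ℕ → Set (Set ℝ)) (f : ℕ → ℝ) : Prop :=
  lam (endpointSet Ps) = 0 ∧ Tendsto f atTop atTop ∧
    TendstoInMeasure lam
      (fun n x => -Real.log ((lam (cell (Ps n) x)).toReal) / f n) atTop (fun _ => 1)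

/-- The Lochs index `L_n(x, Ps¹, Ps²)`. -/
def lochsIndex (P1 P2 : ℕ → Set (Set ℝ)) (n : ℕ) (x : ℝ) : ℕ :=
  sSup {ℓ : ℕ | cell (P1 n) x ⊆ cell (P2 ℓ) x}

/-- The generalized inverse `f^{[-1]}(y) = min {n : f n ≥ y}` of a weight function. -/
def weightInv (f : ℕ → ℝ) (y : ℝ) : ℕ := sInf {n : ℕ | y ≤ f n}

/-!
Put `m = weightInv f y - 1`, so that `f m < y ≤ f (m + 1)`. The little-o hypothesis says that
`f (m + 1) = φ m * f m` with `φ → 1`; once `φ m ≥ 0` this gives `1 ≤ f (m + 1) / y ≤ φ m`, whatever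
the sign of `f m`. And `m → ∞` as `y → ∞`, because `f` takes finitely many values below any index.
-/

section weightInv

variable {f : ℕ → ℝ} {y : ℝ} {n : ℕ}

theorem le_apply_weightInv (hf : ¬BddAbove (range f)) : y ≤ f (weightInv f y) := by
  obtain ⟨_, ⟨n, rfl⟩, hn⟩ := not_bddAbove_iff.1 hf y
  exact Nat.sInf_mem (s := {n | y ≤ f n}) ⟨n, hn.le⟩

theorem apply_lt_of_lt_weightInv (h : n < weightInv f y) : f n < y :=
  not_le.1 (Nat.notMem_of_lt_sInf h)

theorem tendsto_weightInv_atTop (hf : ¬BddAbove (range f)) :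
    Tendsto (weightInv f) atTop atTop := by
  refine tendsto_atTop.2 fun N ↦ ?_
  have above_initial_values : ∀ᶠ y in atTop, ∀ n ∈ Iio N, f n < y :=
    (eventually_all_finite (finite_Iio N)).2 fun n _ ↦ eventually_gt_atTop (f n)
  filter_upwards [above_initial_values] with y hy
  by_contra! hlt
  exact (hy _ hlt).not_ge (le_apply_weightInv hf)

theorem apply_weightInv_le_mul {c : ℝ} (hn : weightInv f y = n + 1) (hc : 0 ≤ c)
    (hstep : f (n + 1) ≤ c * f n) : f (weightInv f y) ≤ c * y := by
  have hlt : f n < y := apply_lt_of_lt_weightInv (hn ▸ n.lt_succ_self)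
  calc f (weightInv f y) = f (n + 1) := by rw [hn]
    _ ≤ c * f n := hstep
    _ ≤ c * y := mul_le_mul_of_nonneg_left hlt.le hc

end weightInv

theorem weightInv_comp_tendsto_general (f : ℕ → ℝ) (hf : ¬BddAbove (range f))
    (hlittle : (fun n => f (n + 1) - f n) =o[atTop] f) :
    Tendsto (fun y : ℝ => f (weightInv f y) / y) atTop (nhds 1) := by
  obtain ⟨φ, hφ, hstep⟩ := IsEquivalent.exists_eq_mul (u := fun n ↦ f (n + 1)) hlittle
  have hw := tendsto_weightInv_atTop hf
  have hpred : Tendsto (fun y ↦ weightInv f y - 1) atTop atTop :=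
    (tendsto_sub_atTop_nat 1).comp hw
  refine tendsto_of_tendsto_of_tendsto_of_le_of_le' tendsto_const_nhds (hφ.comp hpred) ?_ ?_
  · filter_upwards [eventually_gt_atTop 0] with y hy
    exact (one_le_div hy).2 (le_apply_weightInv hf)
  · filter_upwards [eventually_gt_atTop 0, hw.eventually_gt_atTop 0, hpred.eventually hstep,
      hpred.eventually (hφ.eventually_const_le one_pos)] with y hy hpos hstep_y hφ_nonneg
    have hsucc : weightInv f y = weightInv f y - 1 + 1 := (Nat.sub_add_cancel hpos).symm
    exact (div_le_iff₀ hy).2 (apply_weightInv_le_mul hsucc hφ_nonneg hstep_y.le)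

/-- Lemma: if `f` is nondecreasing, tends to infinity and `f(n+1) - f(n) = o(f(n))`,
then `f(f^{[-1]}(y))/y → 1` as `y → +∞`. -/
theorem weightInv_comp_tendsto (f : ℕ → ℝ) (hmono : Monotone f)
    (htop : Tendsto f atTop atTop)
    (hlittle : (fun n => f (n + 1) - f n) =o[atTop] f) :
    Tendsto (fun y : ℝ => f (weightInv f y) / y) atTop (nhds 1) :=
  weightInv_comp_tendsto_general f (not_bddAbove_of_tendsto_atTop htop) hlittle
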